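/- Let q be a prime power, m ≥ 1, and j ∈ ℕ^m, and let V_j = ∏_{i=1}^m (X_i^q − X_i)^{j_i}. For every point P ∈ F_q^m and every multi-index i ∈ ℕ^m: the i-th Hasse derivative of V_j evaluated at P satisfies H(V_j, i)(P) = 0 whenever i ≥ j fails (i.e., i_l < j_l for some l), and H(V_j, j)(P) = (−1)^{|j|}. -/

import Mathlib

open MvPolynomial

/-!
Evaluating the Hasse derivative of `F` at `P` gives a coefficient of the translate `F(P + Z)`.
Over a field with `q` elements `(P_l + Z_l)^q - (P_l + Z_l) = Z_l^q - Z_l`, since the `q`-th power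
is additive and fixes `P_l`. So `V_j(P + Z) = V_j(Z) = Z^j * ∏ l, (Z_l^(q-1) - 1)^(j_l)`: every
monomial of it is divisible by `Z^j`, and the coefficient of `Z^j` is the constant term
`(-1)^|j|` of the cofactor.
-/

/-- `Vj q j = ∏ i (X i ^ q - X i) ^ (j i)` -/
noncomputable def Vj {K : Type} [CommRing K] {m : ℕ} (q : ℕ) (j : Fin m →₀ ℕ) :
    MvPolynomial (Fin m) K :=
  ∏ i : Fin m, (X i ^ q - X i) ^ (j i)

/-- The `i`-th Hasse derivative of `F`: the coefficient of `Z^i` in `F(X+Z)`. -/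
noncomputable def hasseDerivM {K : Type} [CommRing K] {m : ℕ} (i : Fin m →₀ ℕ)
    (F : MvPolynomial (Fin m) K) : MvPolynomial (Fin m) K :=
  MvPolynomial.coeff i
    ((MvPolynomial.aeval
        (fun l => (MvPolynomial.C (MvPolynomial.X l) + MvPolynomial.X l :
          MvPolynomial (Fin m) (MvPolynomial (Fin m) K)))) F)

theorem eval_hasseDerivM {K : Type} [CommRing K] {m : ℕ} (i : Fin m →₀ ℕ)
    (F : MvPolynomial (Fin m) K) (P : Fin m → K) :
    eval P (hasseDerivM i F) =
      coeff i (aeval (fun l => (C (P l) + X l : MvPolynomial (Fin m) K)) F) := by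
  unfold hasseDerivM
  rw [← coeff_map]
  congr 1
  induction F using MvPolynomial.induction_on with
  | C a => simp [MvPolynomial.algebraMap_apply, algebraMap_eq]
  | add p q hp hq => simp only [map_add, hp, hq]
  | mul_X p n hp => simp only [map_mul, hp, aeval_X, map_add, map_C, map_X, eval_X]

theorem translate_factor {K : Type} [Field K] [Fintype K] {m : ℕ} (a : K) (l : Fin m) :
    (C a + X l : MvPolynomial (Fin m) K) ^ Fintype.card K - (C a + X l) =
      X l * (X l ^ (Fintype.card K - 1) - 1) := by
  obtain ⟨p, hp⟩ := CharP.exists K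
  obtain ⟨n, hprime, hcard⟩ := FiniteField.card K p
  have : Fact p.Prime := ⟨hprime⟩
  have hadd : (C a + X l : MvPolynomial (Fin m) K) ^ Fintype.card K =
      C a ^ Fintype.card K + X l ^ Fintype.card K := by
    rw [hcard, add_pow_char_pow]
  rw [hadd, ← C_pow, FiniteField.pow_card, mul_sub, mul_one,
    mul_pow_sub_one Fintype.card_ne_zero]
  ring

theorem aeval_translate_Vj {K : Type} [Field K] [Fintype K] {m : ℕ} (j : Fin m →₀ ℕ)
    (P : Fin m → K) :
    aeval (fun l => (C (P l) + X l : MvPolynomial (Fin m) K))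
        (Vj (Fintype.card K) j : MvPolynomial (Fin m) K) =
      monomial j 1 * ∏ l, (X l ^ (Fintype.card K - 1) - 1) ^ (j l) := by
  have hmon : (monomial j 1 : MvPolynomial (Fin m) K) = ∏ l, X l ^ j l := by
    rw [monomial_eq, C_1, one_mul, Finsupp.prod_fintype _ _ (fun _ => pow_zero _)]
  simp only [Vj, map_prod, map_pow, map_sub, aeval_X]
  rw [hmon, ← Finset.prod_mul_distrib]
  exact Finset.prod_congr rfl fun l _ => by rw [translate_factor, mul_pow]

/-- For every `P ∈ F_q^m`: `H(V_j, i)(P) = 0` whenever `i ≥ j` fails, and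
`H(V_j, j)(P) = (-1)^{|j|}`. -/
theorem stmt7 (q m : ℕ) (hq : IsPrimePow q) (hm : 1 ≤ m)
    (K : Type) [Field K] [Fintype K] (hK : Fintype.card K = q)
    (j : Fin m →₀ ℕ) (P : Fin m → K) :
    (∀ i : Fin m →₀ ℕ, ¬ j ≤ i →
      MvPolynomial.eval P (hasseDerivM i (Vj q j : MvPolynomial (Fin m) K)) = 0) ∧
    MvPolynomial.eval P (hasseDerivM j (Vj q j : MvPolynomial (Fin m) K))
      = (-1) ^ (∑ l, j l) := by
  subst hK
  refine ⟨fun i hi => ?_, ?_⟩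
  · rw [eval_hasseDerivM, aeval_translate_Vj, coeff_monomial_mul', if_neg hi]
  · rw [eval_hasseDerivM, aeval_translate_Vj, coeff_monomial_mul', if_pos le_rfl, tsub_self,
      one_mul, ← constantCoeff_eq]
    -- `q - 1` is positive, so `X l ^ (q - 1)` has no constant term.
    have h : Fintype.card K - 1 ≠ 0 := by
      have := Fintype.one_lt_card (α := K)
      omega
    simp [h, Finset.prod_pow_eq_pow_sum]
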